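/- (Undercutting lemma.) In the Bertrand pricing game with incomplete information with n ≥ 2 firms, let p be a strategy profile and suppose there exist a firm i, a signal profile s, and a state ω with μ(s,ω) > 0 such that i ∈ W(s,ω), p_i(s_i) > 0, and p_i(s_i) is maximal among all prices p_k(s'_k) with k ∈ W(s',ω') for some (s',ω') of positive μ-probability. Then there exist a firm j ≠ i and η₀ > 0 such that for every η with 0 < η < η₀, firm j strictly increases its expected profit by changing its quote at signal s_j to p_i(s_i) − η while leaving its quotes at all other signals unchanged. In particular, p is not a Bayesian Nash equilibrium. -/

import Mathlib

open Classical

/-- The set of winning firms at signal profile `s` and WTP `ω`, under strategy profile `p`: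
those firms quoting the minimal price, provided that price is at most the buyer's WTP. -/
noncomputable def winners {ι : Type*} [Fintype ι] [Nonempty ι] {S : ι → Type*}
    (p : ∀ i, S i → ℝ) (s : ∀ i, S i) (ω : ℝ) : Finset ι :=
  Finset.univ.filter fun j =>
    p j (s j) = Finset.univ.inf' Finset.univ_nonempty (fun k => p k (s k)) ∧ p j (s j) ≤ ω

/-- Realized profit of firm `i`: its price divided by the number of winners if it wins,
and `0` otherwise. -/
noncomputable def realizedProfit {ι : Type*} [Fintype ι] [Nonempty ι] {S : ι → Type*}
    (p : ∀ i, S i → ℝ) (s : ∀ i, S i) (ω : ℝ) (i : ι) : ℝ :=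
  if i ∈ winners p s ω then p i (s i) / (winners p s ω).card else 0

/-- Expected profit of firm `i` under the joint distribution `μ` on signal profiles and WTPs. -/
noncomputable def expProfit {ι : Type*} [Fintype ι] [Nonempty ι] [DecidableEq ι]
    {S : ι → Type*} [∀ i, Fintype (S i)] (μ : (∀ i, S i) → ℝ → ℝ) (Ω : Finset ℝ)
    (p : ∀ i, S i → ℝ) (i : ι) : ℝ :=
  ∑ s : ∀ i, S i, ∑ ω ∈ Ω, μ s ω * realizedProfit p s ω i

/-- Bayesian Nash equilibrium: no firm can strictly increase its expected profit by a
unilateral change of its own strategy. -/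
def isBNE {ι : Type*} [Fintype ι] [Nonempty ι] [DecidableEq ι] {S : ι → Type*}
    [∀ i, Fintype (S i)] (μ : (∀ i, S i) → ℝ → ℝ) (Ω : Finset ℝ)
    (p : ∀ i, S i → ℝ) : Prop :=
  ∀ i : ι, ∀ q : S i → ℝ, expProfit μ Ω (Function.update p i q) i ≤ expProfit μ Ω p i

lemma mem_winners_iff {ι : Type*} [Fintype ι] [Nonempty ι] {S : ι → Type*}
    (p : ∀ i, S i → ℝ) (s : ∀ i, S i) (ω : ℝ) (j : ι) :
    j ∈ winners p s ω ↔ (∀ k, p j (s j) ≤ p k (s k)) ∧ p j (s j) ≤ ω := by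
  unfold winners
  simp only [Finset.mem_filter, Finset.mem_univ, true_and]
  constructor
  · rintro ⟨h1, h2⟩
    refine ⟨fun k => ?_, h2⟩
    rw [h1]
    exact Finset.inf'_le (fun k => p k (s k)) (Finset.mem_univ k)
  · rintro ⟨h1, h2⟩
    refine ⟨le_antisymm ?_ ?_, h2⟩
    · exact Finset.le_inf' _ _ (fun k _ => h1 k)
    · exact Finset.inf'_le (fun k => p k (s k)) (Finset.mem_univ j)

lemma realizedProfit_sole {ι : Type*} [Fintype ι] [Nonempty ι] {S : ι → Type*}
    (p : ∀ i, S i → ℝ) (s : ∀ i, S i) (ω : ℝ) (j : ι)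
    (h : ∀ k, k ≠ j → p j (s j) < p k (s k)) (hω : p j (s j) ≤ ω) :
    realizedProfit p s ω j = p j (s j) := by
  have hw : winners p s ω = {j} := by
    ext k
    rw [mem_winners_iff, Finset.mem_singleton]
    constructor
    · rintro ⟨h1, _⟩
      by_contra hk
      exact absurd (h1 j) (not_le.mpr (h k hk))
    · rintro rfl
      refine ⟨fun l => ?_, hω⟩
      by_cases hl : l = k
      · subst hl; exact le_rfl
      · exact (h l hl).le
  unfold realizedProfit
  rw [hw]
  simp

lemma realizedProfit_nonneg' {ι : Type*} [Fintype ι] [Nonempty ι] {S : ι → Type*}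
    (p : ∀ i, S i → ℝ) (s : ∀ i, S i) (ω : ℝ) (j : ι) (h : 0 ≤ p j (s j)) :
    0 ≤ realizedProfit p s ω j := by
  unfold realizedProfit
  split_ifs
  · positivity
  · exact le_rfl

lemma realizedProfit_congr {ι : Type*} [Fintype ι] [Nonempty ι] {S : ι → Type*}
    (p q : ∀ i, S i → ℝ) (s : ∀ i, S i) (ω : ℝ) (j : ι) (h : ∀ k, q k (s k) = p k (s k)) :
    realizedProfit q s ω j = realizedProfit p s ω j := by
  have hw : winners q s ω = winners p s ω := by
    ext k
    simp only [mem_winners_iff, h]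
  unfold realizedProfit
  rw [hw, h]

/-- Undercutting lemma: with `n ≥ 2` firms, if with positive probability some
firm `i` wins at a strictly positive price `p i (s i)` that is maximal among all winning
prices occurring with positive probability, then some other firm `j` can strictly increase
its expected profit by undercutting that price at its signal `s j` (for every sufficiently
small undercutting margin `η`); in particular `p` is not a Bayesian Nash equilibrium. -/
theorem undercutting_lemma
    {ι : Type*} [Fintype ι] [Nonempty ι] [DecidableEq ι] (hn : 2 ≤ Fintype.card ι)
    {S : ι → Type*} [∀ i, Fintype (S i)] [∀ i, DecidableEq (S i)]
    (Ω : Finset ℝ) (hΩpos : ∀ ω ∈ Ω, 0 < ω)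
    (μ : (∀ i, S i) → ℝ → ℝ)
    (hμ0 : ∀ s ω, 0 ≤ μ s ω)
    (hμ1 : ∑ s : ∀ i, S i, ∑ ω ∈ Ω, μ s ω = 1)
    (p : ∀ i, S i → ℝ) (i : ι) (s : ∀ i, S i) (ω : ℝ) (hωΩ : ω ∈ Ω)
    (hμpos : 0 < μ s ω)
    (hwin : i ∈ winners p s ω)
    (hpos : 0 < p i (s i))
    (hmax : ∀ (s' : ∀ i, S i), ∀ ω' ∈ Ω, 0 < μ s' ω' →
      ∀ k ∈ winners p s' ω', p k (s' k) ≤ p i (s i)) :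
    (∃ j : ι, j ≠ i ∧ ∃ η₀ : ℝ, 0 < η₀ ∧ ∀ η : ℝ, 0 < η → η < η₀ →
      expProfit μ Ω p j <
        expProfit μ Ω (Function.update p j (Function.update (p j) (s j) (p i (s i) - η))) j) ∧
    ¬ isBNE μ Ω p := by
  have key : ∃ j : ι, j ≠ i ∧ ∃ η₀ : ℝ, 0 < η₀ ∧ ∀ η : ℝ, 0 < η → η < η₀ →
      expProfit μ Ω p j <
        expProfit μ Ω (Function.update p j (Function.update (p j) (s j) (p i (s i) - η))) j := by
    obtain ⟨j, hj⟩ : ∃ j, j ≠ i := by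
      have : Nontrivial ι := Fintype.one_lt_card_iff_nontrivial.mp (by omega)
      exact exists_ne i
    rw [mem_winners_iff] at hwin
    obtain ⟨hmin, hle⟩ := hwin
    refine ⟨j, hj, min (p i (s i)) (μ s ω * (p i (s i) / 2)),
      lt_min hpos (by positivity), ?_⟩
    intro η hη hη0
    obtain ⟨hηP, hημ⟩ := lt_min_iff.mp hη0
    set P := p i (s i) with hP
    set q := Function.update p j (Function.update (p j) (s j) (P - η)) with hq
    have hqk : ∀ k, k ≠ j → q k = p k := fun k hk => by
      rw [hq, Function.update_of_ne hk]
    have hqj : ∀ t, t = s j → q j t = P - η := fun t ht => by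
      rw [hq, Function.update_self, ht, Function.update_self]
    have hqj' : ∀ t, t ≠ s j → q j t = p j t := fun t ht => by
      rw [hq, Function.update_self, Function.update_of_ne ht]
    -- pointwise loss is at most `η`
    have hpt : ∀ s', ∀ ω' ∈ Ω, 0 < μ s' ω' →
        realizedProfit p s' ω' j ≤ realizedProfit q s' ω' j + η := by
      intro s' ω' hω' hm
      by_cases hs : s' j = s j
      · by_cases hw : j ∈ winners p s' ω'
        · have h1 := hmax s' ω' hω' hm j hw
          have h2 : P ≤ p j (s' j) := by rw [hs]; exact hmin j
          have h3 := (mem_winners_iff _ _ _ _).mp hw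
          have h4 : realizedProfit q s' ω' j = P - η := by
            rw [realizedProfit_sole, hqj _ hs]
            · intro k hk
              rw [hqj _ hs, hqk k hk]
              linarith [h3.1 k]
            · rw [hqj _ hs]; linarith [h3.2]
          rw [h4]
          have h5 : realizedProfit p s' ω' j ≤ p j (s' j) := by
            unfold realizedProfit
            rw [if_pos hw]
            apply div_le_self (by linarith)
            exact_mod_cast Finset.card_pos.mpr ⟨j, hw⟩
          linarith
        · have h4 : realizedProfit p s' ω' j = 0 := by
            unfold realizedProfit; rw [if_neg hw]
          have := realizedProfit_nonneg' q s' ω' j (by rw [hqj _ hs]; linarith)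
          linarith
      · have : realizedProfit q s' ω' j = realizedProfit p s' ω' j := by
          apply realizedProfit_congr
          intro k
          by_cases hk : k = j
          · subst hk; exact hqj' _ hs
          · rw [hqk k hk]
        linarith
    have hpt0 : realizedProfit p s ω j + P / 2 ≤ realizedProfit q s ω j + η := by
      have h4 : realizedProfit q s ω j = P - η := by
        rw [realizedProfit_sole, hqj _ rfl]
        · intro k hk
          rw [hqj _ rfl, hqk k hk]
          linarith [hmin k]
        · rw [hqj _ rfl]; linarith
      have h5 : realizedProfit p s ω j ≤ P / 2 := by
        unfold realizedProfit
        split_ifs with hw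
        · have h1 := hmax s ω hωΩ hμpos j hw
          have hi : i ∈ winners p s ω := (mem_winners_iff _ _ _ _).mpr ⟨hmin, hle⟩
          have hc : 1 < (winners p s ω).card := Finset.one_lt_card.mpr ⟨j, hw, i, hi, hj⟩
          have hc' : (2 : ℝ) ≤ (winners p s ω).card := by exact_mod_cast hc
          exact div_le_div₀ hpos.le h1 (by norm_num) hc'
        · linarith
      linarith
    let D : (∀ i, S i) → ℝ → ℝ := fun s' ω' =>
      μ s' ω' * (realizedProfit q s' ω' j + η - realizedProfit p s' ω' j)
    have hD0 : ∀ s', ∀ ω' ∈ Ω, 0 ≤ D s' ω' := by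
      intro s' ω' hω'
      rcases (hμ0 s' ω').eq_or_lt with h | h
      · simp [D, ← h]
      · exact mul_nonneg h.le (by linarith [hpt s' ω' hω' h])
    have hD1 : μ s ω * (P / 2) ≤ D s ω :=
      mul_le_mul_of_nonneg_left (by linarith) hμpos.le
    have hD2 : D s ω ≤ ∑ s' : ∀ i, S i, ∑ ω' ∈ Ω, D s' ω' :=
      (Finset.single_le_sum (f := fun ω' => D s ω') (fun ω' h => hD0 s ω' h) hωΩ).trans
        (Finset.single_le_sum (f := fun s' => ∑ ω' ∈ Ω, D s' ω')
          (fun s' _ => Finset.sum_nonneg (hD0 s')) (Finset.mem_univ s))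
    have hD3 : ∑ s' : ∀ i, S i, ∑ ω' ∈ Ω, D s' ω'
        = expProfit μ Ω q j + η - expProfit μ Ω p j := by
      have : η = ∑ s' : ∀ i, S i, ∑ ω' ∈ Ω, μ s' ω' * η := by
        simp only [← Finset.sum_mul]
        rw [hμ1, one_mul]
      conv_rhs => rw [this]
      unfold expProfit
      simp only [← Finset.sum_add_distrib, ← Finset.sum_sub_distrib]
      refine Finset.sum_congr rfl fun s' _ => Finset.sum_congr rfl fun ω' _ => ?_
      simp only [D]
      ring
    linarith
  refine ⟨key, fun hB => ?_⟩
  obtain ⟨j, _, η₀, h0, h⟩ := key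
  exact absurd (hB j _) (not_le.mpr (h (η₀ / 2) (by linarith) (by linarith)))
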